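/- arXiv:1704.07328 — 2 statements merged into one kernel-verified Lean document; each statement's English description precedes it below -/
import Mathlib

section
/- For every θ, φ ∈ (0, π/2) there is a constant c = c(θ, φ) > 0 such that ‖T_x(n, m; i)‖ ≤ c for all n, m ∈ ℤ and all x ∈ X_TM, where i is the imaginary unit. -/
/-- The Thue–Morse sequence: the number of 1 digits in the binary expansion, mod 2. -/
def thueMorse (n : ℕ) : ℕ := (Nat.digits 2 n).sum % 2

/-- Membership in the Thue–Morse subshift: every finite subword of `x`
occurs as a subword of the Thue–Morse sequence. -/
def MemTMSubshift (x : ℤ → ℕ) : Prop :=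
  ∀ (m : ℤ) (k : ℕ), ∃ M : ℕ, ∀ j ≤ k, x (m + j) = thueMorse (M + j)

/-- The matrix `A_γ(z) = sec γ · [[z⁻¹, -sin γ], [-sin γ, z]]`. -/
noncomputable def Amat (γ : ℝ) (z : ℂ) : Matrix (Fin 2) (Fin 2) ℂ :=
  ((Real.cos γ)⁻¹ : ℂ) • !![z⁻¹, -(Real.sin γ : ℂ); -(Real.sin γ : ℂ), z]

/-- The one-step transfer matrix `M_x(n; z)`. -/
noncomputable def Mmat (θ φ : ℝ) (x : ℤ → ℕ) (z : ℂ) (n : ℤ) : Matrix (Fin 2) (Fin 2) ℂ :=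
  if x n = 0 then Amat φ z else Amat θ z

/-- Ordered product `M_x(m+k-1; z) ⋯ M_x(m+1; z) · M_x(m; z)`. -/
noncomputable def Tprod (θ φ : ℝ) (x : ℤ → ℕ) (z : ℂ) (m : ℤ) : ℕ → Matrix (Fin 2) (Fin 2) ℂ
  | 0 => 1
  | k + 1 => Mmat θ φ x z (m + k) * Tprod θ φ x z m k

/-- The transfer matrix `T_x(n, m; z)`: for `n > m` the product
`M_x(n-1;z) ⋯ M_x(m;z)`, the identity for `n = m`, and `T_x(m,n;z)⁻¹` for `n < m`. -/
noncomputable def Tmat (θ φ : ℝ) (x : ℤ → ℕ) (z : ℂ) (n m : ℤ) : Matrix (Fin 2) (Fin 2) ℂ :=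
  if m ≤ n then Tprod θ φ x z m (n - m).toNat
  else (Tprod θ φ x z n (m - n).toNat)⁻¹

attribute [local instance] Matrix.instL2OpNormedAddCommGroup

/-!
If `z² = -1` then `A_γ(z)` has trace `0` and determinant `1`, so `A_γ(z)² = -1` by Cayley–Hamilton.
The Thue–Morse sequence is a concatenation of the blocks `0110` and `1001`, along which the product
of transfer matrices is therefore `1`. Hence the products along prefixes of the sequence take only
finitely many values. Every transfer matrix over the subshift has the form `P Q⁻¹` with `P` and `Q`
such prefix products, so there are only finitely many transfer matrices.
-/

theorem thueMorse_eq_zero_or_one (n : ℕ) : thueMorse n = 0 ∨ thueMorse n = 1 :=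
  Nat.mod_two_eq_zero_or_one _

theorem thueMorse_two_mul_add (n : ℕ) {r : ℕ} (hr : r < 2) :
    thueMorse (2 * n + r) = (thueMorse n + r) % 2 := by
  by_cases h : r ≠ 0 ∨ n ≠ 0
  · rw [thueMorse, thueMorse, add_comm, Nat.digits_add 2 one_lt_two r n hr h, List.sum_cons]
    omega
  · obtain ⟨rfl, rfl⟩ : r = 0 ∧ n = 0 := by tauto
    rfl

theorem thueMorse_two_pow_mul_add (q : ℕ) {k r : ℕ} (hr : r < 2 ^ k) :
    thueMorse (2 ^ k * q + r) = (thueMorse q + thueMorse r) % 2 := by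
  induction k generalizing r with
  | zero =>
    obtain rfl : r = 0 := by simpa using hr
    simp [thueMorse]
  | succ k ih =>
    have hr_mod : r % 2 < 2 := Nat.mod_lt _ two_pos
    have hr_div : r / 2 < 2 ^ k := by omega
    have hr_split : thueMorse r = (thueMorse (r / 2) + r % 2) % 2 := by
      rw [← thueMorse_two_mul_add _ hr_mod, Nat.div_add_mod]
    have hsplit : 2 ^ (k + 1) * q + r = 2 * (2 ^ k * q + r / 2) + r % 2 := by
      rw [pow_succ', mul_add, add_assoc, Nat.div_add_mod, mul_assoc]
    rw [hsplit, thueMorse_two_mul_add _ hr_mod, ih hr_div, hr_split]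
    omega

section Monoid

variable {M : Type*} [Monoid M] {a b : M}

/-- The product of the first `n` letters of the Thue–Morse sequence, with `a` for `0` and `b` for
`1`. As for transfer matrices, later letters stand to the left of earlier ones. -/
def thueMorseProd (a b : M) : ℕ → M
  | 0 => 1
  | n + 1 => (if thueMorse n = 0 then a else b) * thueMorseProd a b n

theorem isUnit_thueMorseProd (ha : IsUnit a) (hb : IsUnit b) (n : ℕ) :
    IsUnit (thueMorseProd a b n) := by
  induction n with
  | zero => exact isUnit_one
  | succ n ih =>
    rw [thueMorseProd]
    split_ifs
    exacts [ha.mul ih, hb.mul ih]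

theorem thueMorseProd_two_pow_mul_add (a b : M) (q : ℕ) {k r : ℕ} (hr : r ≤ 2 ^ k) :
    thueMorseProd a b (2 ^ k * q + r) =
      (if thueMorse q = 0 then thueMorseProd a b r else thueMorseProd b a r) *
        thueMorseProd a b (2 ^ k * q) := by
  induction r with
  | zero => simp [thueMorseProd]
  | succ r ih =>
    rw [← add_assoc, thueMorseProd, ih (by omega), thueMorse_two_pow_mul_add q hr]
    rcases thueMorse_eq_zero_or_one q with hq | hq <;>
      rcases thueMorse_eq_zero_or_one r with ht | ht <;>
      simp [thueMorseProd, hq, ht, mul_assoc]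

theorem thueMorseProd_two_pow_mul {k : ℕ} (hab : thueMorseProd a b (2 ^ k) = 1)
    (hba : thueMorseProd b a (2 ^ k) = 1) (q : ℕ) : thueMorseProd a b (2 ^ k * q) = 1 := by
  induction q with
  | zero => rfl
  | succ q ih =>
    rw [mul_add_one, thueMorseProd_two_pow_mul_add a b q le_rfl, hab, hba, ite_self, ih, one_mul]

theorem finite_range_thueMorseProd {k : ℕ} (hab : thueMorseProd a b (2 ^ k) = 1)
    (hba : thueMorseProd b a (2 ^ k) = 1) : (Set.range (thueMorseProd a b)).Finite := by
  have hfin (c d : M) : (thueMorseProd c d '' Set.Iio (2 ^ k)).Finite := (Set.finite_Iio _).image _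
  refine ((hfin a b).union (hfin b a)).subset (Set.range_subset_iff.2 fun n ↦ ?_)
  have hr : n % 2 ^ k < 2 ^ k := Nat.mod_lt _ (by positivity)
  rw [← Nat.div_add_mod n (2 ^ k), thueMorseProd_two_pow_mul_add a b _ hr.le,
    thueMorseProd_two_pow_mul hab hba, mul_one]
  split_ifs
  · exact .inl (Set.mem_image_of_mem _ hr)
  · exact .inr (Set.mem_image_of_mem _ hr)

end Monoid

theorem thueMorseProd_four_of_mul_self_eq_neg_one {R : Type*} [Ring R] {a b : R}
    (ha : a * a = -1) (hb : b * b = -1) : thueMorseProd a b 4 = 1 :=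
  calc thueMorseProd a b 4
    _ = a * (b * b) * a := by simp [thueMorseProd, thueMorse, mul_assoc]
    _ = 1 := by simp [ha, hb]

theorem mul_self_eq_neg_one_of_trace_eq_zero_of_det_eq_one {R : Type*} [CommRing R]
    {A : Matrix (Fin 2) (Fin 2) R} (htrace : A.trace = 0) (hdet : A.det = 1) : A * A = -1 := by
  nontriviality R
  have hcayley : A ^ 2 + 1 = 0 := by
    simpa [Matrix.charpoly_fin_two, htrace, hdet] using A.aeval_self_charpoly
  rw [← sq]
  exact eq_neg_of_add_eq_zero_left hcayley

section Amat

variable {γ : ℝ} {z : ℂ}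

theorem det_Amat (hγ : Real.cos γ ≠ 0) (hz : z ≠ 0) : (Amat γ z).det = 1 := by
  have hcos : (Real.cos γ : ℂ) ≠ 0 := Complex.ofReal_ne_zero.2 hγ
  have hpyth : (Real.sin γ : ℂ) ^ 2 + (Real.cos γ : ℂ) ^ 2 = 1 := by
    exact_mod_cast Real.sin_sq_add_cos_sq γ
  rw [Amat, Matrix.det_smul, Matrix.det_fin_two_of, Fintype.card_fin, inv_mul_cancel₀ hz]
  field_simp
  linear_combination -hpyth

theorem trace_Amat (hz : z ^ 2 = -1) : (Amat γ z).trace = 0 := by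
  have hinv : z⁻¹ = -z := inv_eq_of_mul_eq_one_right (by linear_combination -hz)
  simp [Amat, Matrix.trace_fin_two, hinv]

theorem Amat_mul_self (hγ : Real.cos γ ≠ 0) (hz : z ^ 2 = -1) : Amat γ z * Amat γ z = -1 := by
  have hz0 : z ≠ 0 := by
    rintro rfl
    simp at hz
  exact mul_self_eq_neg_one_of_trace_eq_zero_of_det_eq_one (trace_Amat hz) (det_Amat hγ hz0)

end Amat

section TransferMatrix

variable {θ φ : ℝ} {z : ℂ} {x : ℤ → ℕ}

theorem Tprod_mul_thueMorseProd {m : ℤ} {M k : ℕ} (h : ∀ j < k, x (m + j) = thueMorse (M + j)) :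
    Tprod θ φ x z m k * thueMorseProd (Amat φ z) (Amat θ z) M =
      thueMorseProd (Amat φ z) (Amat θ z) (M + k) := by
  induction k with
  | zero => simp [Tprod]
  | succ k ih =>
    rw [Tprod, mul_assoc, ih fun j hj ↦ h j (by omega), Mmat, h k (by omega), ← add_assoc,
      thueMorseProd]

theorem exists_Tprod_eq_thueMorseProd_mul_inv (hφ : IsUnit (Amat φ z)) (hθ : IsUnit (Amat θ z))
    (hx : MemTMSubshift x) (m : ℤ) (k : ℕ) :
    ∃ p q, Tprod θ φ x z m k =
      thueMorseProd (Amat φ z) (Amat θ z) p * (thueMorseProd (Amat φ z) (Amat θ z) q)⁻¹ := by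
  obtain ⟨M, hM⟩ := hx m k
  refine ⟨M + k, M, ?_⟩
  have hdet := (Matrix.isUnit_iff_isUnit_det _).1 (isUnit_thueMorseProd hφ hθ M)
  rw [← Tprod_mul_thueMorseProd fun j hj ↦ hM j hj.le,
    Matrix.mul_nonsing_inv_cancel_right _ _ hdet]

theorem exists_Tmat_eq_thueMorseProd_mul_inv (hφ : IsUnit (Amat φ z)) (hθ : IsUnit (Amat θ z))
    (hx : MemTMSubshift x) (n m : ℤ) :
    ∃ p q, Tmat θ φ x z n m =
      thueMorseProd (Amat φ z) (Amat θ z) p * (thueMorseProd (Amat φ z) (Amat θ z) q)⁻¹ := by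
  unfold Tmat
  split_ifs
  · exact exists_Tprod_eq_thueMorseProd_mul_inv hφ hθ hx _ _
  · obtain ⟨p, q, hpq⟩ := exists_Tprod_eq_thueMorseProd_mul_inv hφ hθ hx n (m - n).toNat
    refine ⟨q, p, ?_⟩
    have hdet := (Matrix.isUnit_iff_isUnit_det _).1 (isUnit_thueMorseProd hφ hθ q)
    rw [hpq, Matrix.mul_inv_rev, Matrix.nonsing_inv_nonsing_inv _ hdet]

theorem finite_setOf_Tmat (hθ : Real.cos θ ≠ 0) (hφ : Real.cos φ ≠ 0) (hz : z ^ 2 = -1) :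
    {T | ∃ n m x, MemTMSubshift x ∧ Tmat θ φ x z n m = T}.Finite := by
  have hA := Amat_mul_self hφ hz
  have hB := Amat_mul_self hθ hz
  have hprod : (Set.range (thueMorseProd (Amat φ z) (Amat θ z))).Finite :=
    finite_range_thueMorseProd (k := 2) (thueMorseProd_four_of_mul_self_eq_neg_one hA hB)
      (thueMorseProd_four_of_mul_self_eq_neg_one hB hA)
  have hunit {X : Matrix (Fin 2) (Fin 2) ℂ} (hX : X * X = -1) : IsUnit X :=
    .of_mul_eq_one (-X) (by rw [mul_neg, hX, neg_neg])
  refine (hprod.image2 (fun P Q ↦ P * Q⁻¹) hprod).subset ?_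
  rintro _ ⟨n, m, x, hx, rfl⟩
  obtain ⟨p, q, hpq⟩ := exists_Tmat_eq_thueMorseProd_mul_inv (hunit hA) (hunit hB) hx n m
  exact ⟨_, ⟨p, rfl⟩, _, ⟨q, rfl⟩, hpq.symm⟩

end TransferMatrix

theorem tm_transfer_matrices_bounded_at_i_general {θ φ : ℝ} {z : ℂ} (hθ : Real.cos θ ≠ 0)
    (hφ : Real.cos φ ≠ 0) (hz : z ^ 2 = -1) :
    ∃ c > 0, ∀ (n m : ℤ) (x : ℤ → ℕ), MemTMSubshift x → ‖Tmat θ φ x z n m‖ ≤ c := by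
  obtain ⟨c, hc, hbound⟩ := (finite_setOf_Tmat hθ hφ hz).isBounded.exists_pos_norm_le
  exact ⟨c, hc, fun n m x hx ↦ hbound _ ⟨n, m, x, hx, rfl⟩⟩

/-- **Lemma (boundedness of Thue–Morse transfer matrices at `z = i`)**. -/
theorem tm_transfer_matrices_bounded_at_i (θ φ : ℝ)
    (hθ : θ ∈ Set.Ioo 0 (Real.pi / 2)) (hφ : φ ∈ Set.Ioo 0 (Real.pi / 2)) :
    ∃ c > 0, ∀ (n m : ℤ) (x : ℤ → ℕ), MemTMSubshift x →
      ‖Tmat θ φ x Complex.I n m‖ ≤ c := by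
  have hcos {γ : ℝ} (hγ : γ ∈ Set.Ioo 0 (Real.pi / 2)) : Real.cos γ ≠ 0 :=
    (Real.cos_pos_of_mem_Ioo ⟨by linarith [hγ.1, Real.pi_pos], hγ.2⟩).ne'
  exact tm_transfer_matrices_bounded_at_i_general (hcos hθ) (hcos hφ) Complex.I_sq
end

section
/- For every x in the Thue–Morse subshift X_TM there exists a unique r ∈ {0, 1, 2, 3} such that for every k ∈ ℤ, the 4-tuple (x_{4k+r}, x_{4k+r+1}, x_{4k+r+2}, x_{4k+r+3}) is equal to (0,1,1,0) or to (1,0,0,1); that is, every x ∈ X_TM decomposes uniquely into consecutive blocks of the form 0110 and 1001. -/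
/-!
The words `abab` synchronize the decomposition: inside a concatenation of the blocks `0110` and
`1001`, whose letters at distance two differ, such a word must start in the middle of a block. The
Thue–Morse sequence is such a concatenation and contains `abab` with bounded gaps, so every `x` in
the subshift contains it as well, say at `i`. Comparing with the Thue–Morse sequence on windows
around `i`, the blocks of `x` start exactly at the positions congruent to `i + 2` modulo `4`.
-/

/-- The factor of length four of the sequence `x` at position `i`, for sequences indexed by `ℕ` or
by `ℤ`; a quadruple, so that it can be compared directly with `(0, 1, 1, 0)` and `(1, 0, 0, 1)`. -/
def fourFactor {ι α : Type*} [AddMonoidWithOne ι] (x : ι → α) (i : ι) : α × α × α × α :=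
  (x i, x (i + 1), x (i + 2), x (i + 3))

/-- The blocks `0110` and `1001`, images of the letters under the square of the Thue–Morse
substitution `0 ↦ 01`, `1 ↦ 10`. -/
def IsTMBlock (w : ℕ × ℕ × ℕ × ℕ) : Prop :=
  w = (0, 1, 1, 0) ∨ w = (1, 0, 0, 1)

/-- The words `abab`, which mark where the blocks of a concatenation of Thue–Morse blocks start. -/
def IsPairSquare {α : Type*} (w : α × α × α × α) : Prop :=
  ∃ a b, w = (a, b, a, b)

theorem IsTMBlock.ne_and_ne {a b c d : ℕ} (h : IsTMBlock (a, b, c, d)) : a ≠ c ∧ b ≠ d := by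
  simp only [IsTMBlock, Prod.mk.injEq] at h
  omega

theorem IsPairSquare.eq_and_eq {α : Type*} {a b c d : α} (h : IsPairSquare (a, b, c, d)) :
    a = c ∧ b = d := by
  obtain ⟨_, _, h⟩ := h
  simp_all

theorem offset_eq_two_of_isPairSquare {ι : Type*} [AddMonoidWithOne ι] {x : ι → ℕ} {i : ι}
    {c : ℕ} (hc : c < 4) (hfst : IsTMBlock (fourFactor x i))
    (hsnd : IsTMBlock (fourFactor x (i + 4))) (hsq : IsPairSquare (fourFactor x (i + c))) :
    c = 2 := by
  obtain ⟨hne₀, hne₁⟩ := hfst.ne_and_ne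
  obtain ⟨hne₄, -⟩ := hsnd.ne_and_ne
  obtain ⟨heq₀, heq₁⟩ := hsq.eq_and_eq
  -- For `c ≠ 2`, the word at `i + c` repeats a letter at distance two inside a single block.
  interval_cases c
  · exact absurd heq₀ (by simpa using hne₀)
  · exact absurd heq₀ (by norm_num [add_assoc, hne₁])
  · rfl
  · have hne : x (i + (3 + 1)) ≠ x (i + (3 + 3)) := by
      convert hne₄ using 2 <;> norm_num [add_assoc]
    exact absurd heq₁ (by simpa [add_assoc] using hne)

theorem emod_four_eq_of_isPairSquare {x : ℤ → ℕ} {i r : ℤ}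
    (hr : ∀ k, IsTMBlock (fourFactor x (4 * k + r))) (hi : IsPairSquare (fourFactor x i)) :
    r % 4 = (i + 2) % 4 := by
  obtain ⟨k, c, hc, rfl⟩ : ∃ (k : ℤ) (c : ℕ), c < 4 ∧ i = 4 * k + r + c :=
    ⟨(i - r) / 4, ((i - r) % 4).toNat, by omega, by omega⟩
  have hsnd : IsTMBlock (fourFactor x (4 * k + r + 4)) := by
    convert hr (k + 1) using 2
    ring
  have := offset_eq_two_of_isPairSquare hc (hr k) hsnd hi
  omega

theorem thueMorse_lt_two (n : ℕ) : thueMorse n < 2 := Nat.mod_lt _ two_pos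

theorem thueMorse_two_mul (n : ℕ) : thueMorse (2 * n) = thueMorse n := by
  rcases n.eq_zero_or_pos with rfl | hn
  · rw [mul_zero]
  · simp [thueMorse, Nat.digits_base_mul one_lt_two hn]

theorem thueMorse_two_mul_add_one (n : ℕ) : thueMorse (2 * n + 1) = 1 - thueMorse n := by
  have hdigits : Nat.digits 2 (2 * n + 1) = 1 :: Nat.digits 2 n := by
    rw [add_comm, Nat.digits_add 2 one_lt_two 1 n one_lt_two (.inl one_ne_zero)]
  simp only [thueMorse, hdigits, List.sum_cons]
  omega

theorem fourFactor_thueMorse_four_mul (n : ℕ) :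
    fourFactor thueMorse (4 * n) =
      (thueMorse n, 1 - thueMorse n, 1 - thueMorse n, thueMorse n) := by
  have h0 : 4 * n = 2 * (2 * n) := by ring
  have h2 : 2 * (2 * n) + 2 = 2 * (2 * n + 1) := by ring
  have h3 : 2 * (2 * n) + 3 = 2 * (2 * n + 1) + 1 := by ring
  have hlt := thueMorse_lt_two n
  simp only [fourFactor, h0, h2, h3, thueMorse_two_mul, thueMorse_two_mul_add_one, Prod.mk.injEq,
    true_and]
  omega

theorem isTMBlock_fourFactor_thueMorse_four_mul (n : ℕ) :
    IsTMBlock (fourFactor thueMorse (4 * n)) := by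
  have hlt := thueMorse_lt_two n
  rw [fourFactor_thueMorse_four_mul]
  interval_cases thueMorse n <;> simp [IsTMBlock]

theorem isPairSquare_fourFactor_thueMorse_eight_mul_add_two (n : ℕ) :
    IsPairSquare (fourFactor thueMorse (8 * n + 2)) := by
  have hfst := fourFactor_thueMorse_four_mul (2 * n)
  have hsnd := fourFactor_thueMorse_four_mul (2 * n + 1)
  have hsub : 1 - (1 - thueMorse n) = thueMorse n :=
    Nat.sub_sub_self (Nat.le_of_lt_succ (thueMorse_lt_two n))
  have hfst_pos : 4 * (2 * n) = 8 * n := by ring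
  have hsnd_pos : 4 * (2 * n + 1) = 8 * n + 4 := by ring
  simp only [fourFactor, hfst_pos, hsnd_pos, thueMorse_two_mul, thueMorse_two_mul_add_one, hsub,
    add_assoc, Nat.reduceAdd, Prod.mk.injEq] at hfst hsnd
  exact ⟨1 - thueMorse n, thueMorse n, by simp [fourFactor, add_assoc, hfst, hsnd]⟩

theorem mod_four_eq_two_of_isPairSquare_thueMorse {n : ℕ}
    (hn : IsPairSquare (fourFactor thueMorse n)) : n % 4 = 2 := by
  rw [← Nat.div_add_mod n 4] at hn
  exact offset_eq_two_of_isPairSquare (Nat.mod_lt n four_pos)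
    (isTMBlock_fourFactor_thueMorse_four_mul (n / 4))
    (isTMBlock_fourFactor_thueMorse_four_mul (n / 4 + 1)) hn

namespace MemTMSubshift

variable {x : ℤ → ℕ}

theorem exists_fourFactor_eq (hx : MemTMSubshift x) (m : ℤ) (k : ℕ) :
    ∃ M : ℕ, ∀ j ≤ k, fourFactor x (m + j) = fourFactor thueMorse (M + j) := by
  obtain ⟨M, hM⟩ := hx m (k + 3)
  refine ⟨M, fun j hj => ?_⟩
  have hletter (c : ℕ) (hc : c ≤ 3) : x (m + j + c) = thueMorse (M + j + c) := by
    simpa [add_assoc] using hM (j + c) (by omega)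
  have h0 := hletter 0 (by norm_num)
  have h1 := hletter 1 (by norm_num)
  have h2 := hletter 2 (by norm_num)
  have h3 := hletter 3 (by norm_num)
  simp_all [fourFactor]

theorem exists_isPairSquare (hx : MemTMSubshift x) : ∃ i, IsPairSquare (fourFactor x i) := by
  obtain ⟨M, hM⟩ := hx.exists_fourFactor_eq 0 7
  obtain ⟨n, j, hj, hn⟩ : ∃ n j : ℕ, j ≤ 7 ∧ M + j = 8 * n + 2 :=
    ⟨(M + 5) / 8, 8 * ((M + 5) / 8) + 2 - M, by omega, by omega⟩
  refine ⟨0 + j, ?_⟩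
  rw [hM j hj, hn]
  exact isPairSquare_fourFactor_thueMorse_eight_mul_add_two n

theorem isTMBlock_of_isPairSquare (hx : MemTMSubshift x) {i j : ℤ}
    (hi : IsPairSquare (fourFactor x i)) (hij : j % 4 = (i + 2) % 4) :
    IsTMBlock (fourFactor x j) := by
  obtain ⟨m, a, b, rfl, rfl⟩ : ∃ (m : ℤ) (a b : ℕ), i = m + a ∧ j = m + b :=
    ⟨min i j, (i - min i j).toNat, (j - min i j).toNat, by omega, by omega⟩
  obtain ⟨M, hM⟩ := hx.exists_fourFactor_eq m (max a b)
  rw [hM a (le_max_left a b)] at hi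
  have hmod := mod_four_eq_two_of_isPairSquare_thueMorse hi
  obtain ⟨n, hn⟩ : ∃ n, M + b = 4 * n := ⟨(M + b) / 4, by omega⟩
  rw [hM b (le_max_right a b), hn]
  exact isTMBlock_fourFactor_thueMorse_four_mul n

end MemTMSubshift

/-- Every element of the Thue–Morse subshift decomposes uniquely into consecutive
blocks of the form `0110` and `1001`: there is a unique offset `r ∈ {0,1,2,3}` such
that each aligned 4-block `(x_{4k+r}, x_{4k+r+1}, x_{4k+r+2}, x_{4k+r+3})` equals
`(0,1,1,0)` or `(1,0,0,1)`. -/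
theorem tm_unique_block_decomposition (x : ℤ → ℕ) (hx : MemTMSubshift x) :
    ∃! r : ℤ, 0 ≤ r ∧ r < 4 ∧
      ∀ k : ℤ,
        (x (4 * k + r), x (4 * k + r + 1), x (4 * k + r + 2), x (4 * k + r + 3))
            = (0, 1, 1, 0) ∨
        (x (4 * k + r), x (4 * k + r + 1), x (4 * k + r + 2), x (4 * k + r + 3))
            = (1, 0, 0, 1) := by
  obtain ⟨i, hi⟩ := hx.exists_isPairSquare
  refine ⟨(i + 2) % 4, ⟨by omega, by omega, fun k => ?_⟩, fun r ⟨hr0, hr4, hr⟩ => ?_⟩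
  · exact hx.isTMBlock_of_isPairSquare hi (by omega)
  · rw [← emod_four_eq_of_isPairSquare hr hi, Int.emod_eq_of_lt hr0 hr4]
end
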